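/- Let ℓ be an odd prime and let G be a subgroup of GL₂(F_ℓ) such that every element of G lies in a conjugate of the nonsplit Cartan subgroup C_ns (equivalently, each element is scalar or has irreducible characteristic polynomial). Then one of the following holds: (0) G is contained in a conjugate of C_ns; (1) G is contained in a conjugate of N_ns; (2) the image H of G in PGL₂(F_ℓ) is isomorphic to A₄ and ℓ ≡ 11 (mod 12); (3) H is isomorphic to S₄ and ℓ ≡ 23 (mod 24); (4) H is isomorphic to A₅ and ℓ ≡ 59 (mod 60). -/

import Mathlib

/-!
Let `H` be the image of `G` in `PGL₂(F)` and let `K` be a quadratic extension of `F`. A nontrivial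
element of `H` lies in a nonsplit torus, so it fixes exactly two points of `ℙ¹(K)`, its poles, and
no point of `ℙ¹(F)`.

The first property is all that Klein's classification of the finite rotation groups needs. By
Burnside's lemma, `H` is trivial, or it preserves the two poles of some nontrivial element, or it
has three orbits of poles with stabilizers of orders `(2, 3, 3)`, `(2, 3, 4)` or `(2, 3, 5)`. In
the second case `G` normalizes a nonsplit Cartan subgroup. In the last three, `H` is identified
with `A₄`, `S₄` or `A₅` through its action on an orbit of four poles, on its four Sylow
`3`-subgroups or on its five Sylow `2`-subgroups. By the second property `H` acts freely on
`ℙ¹(F)`, so `|H|` divides `|F| + 1`, which is the congruence.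
-/

open Matrix

abbrev GL2 (ℓ : ℕ) : Type := GL (Fin 2) (ZMod ℓ)

/-- The underlying matrix of an element of `GL₂(F_ℓ)`. -/
def mat {ℓ : ℕ} (g : GL2 ℓ) : Matrix (Fin 2) (Fin 2) (ZMod ℓ) := g

/-- `g` is a diagonal matrix. -/
def IsDiag {ℓ : ℕ} (g : GL2 ℓ) : Prop := mat g 0 1 = 0 ∧ mat g 1 0 = 0

/-- `g` is an antidiagonal matrix. -/
def IsAnti {ℓ : ℕ} (g : GL2 ℓ) : Prop := mat g 0 0 = 0 ∧ mat g 1 1 = 0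

/-- `g` is a scalar matrix. -/
def IsScalar {ℓ : ℕ} (g : GL2 ℓ) : Prop :=
  ∃ c : ZMod ℓ, mat g = c • (1 : Matrix (Fin 2) (Fin 2) (ZMod ℓ))

/-- Membership in the split Cartan subgroup `C_sp` (the diagonal matrices). -/
def InCsp {ℓ : ℕ} (g : GL2 ℓ) : Prop := IsDiag g

/-- Membership in the normalizer `N_sp` of the split Cartan (diagonal or antidiagonal). -/
def InNsp {ℓ : ℕ} (g : GL2 ℓ) : Prop := IsDiag g ∨ IsAnti g

/-- Membership in the nonsplit Cartan `C_ns` w.r.t. the nonresidue `δ`: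
matrices of the form `[[a, δb], [b, a]]`. -/
def InCns {ℓ : ℕ} (δ : ZMod ℓ) (g : GL2 ℓ) : Prop :=
  mat g 1 1 = mat g 0 0 ∧ mat g 0 1 = δ * mat g 1 0

/-- Membership in `N_ns \ C_ns` (as a matrix shape): `[[a, -δb], [b, -a]]`. -/
def InNnsAnti {ℓ : ℕ} (δ : ZMod ℓ) (g : GL2 ℓ) : Prop :=
  mat g 1 1 = - mat g 0 0 ∧ mat g 0 1 = - (δ * mat g 1 0)

/-- Membership in the normalizer `N_ns` of the nonsplit Cartan. -/
def InNns {ℓ : ℕ} (δ : ZMod ℓ) (g : GL2 ℓ) : Prop := InCns δ g ∨ InNnsAnti δ g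

/-- `PGL₂(F_ℓ)`: the quotient of `GL₂(F_ℓ)` by its center (the scalar matrices). -/
abbrev PGL2 (ℓ : ℕ) : Type := GL2 ℓ ⧸ Subgroup.center (GL2 ℓ)

/-- The natural projection `GL₂(F_ℓ) →* PGL₂(F_ℓ)`. -/
def toPGL (ℓ : ℕ) : GL2 ℓ →* PGL2 ℓ := QuotientGroup.mk' _

/-- The image of a subgroup of `GL₂(F_ℓ)` in `PGL₂(F_ℓ)`. -/
def projImage {ℓ : ℕ} (G : Subgroup (GL2 ℓ)) : Subgroup (PGL2 ℓ) := G.map (toPGL ℓ)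

/-- `H` is isomorphic to the alternating group `A₄`. -/
def IsA4 {ℓ : ℕ} (H : Subgroup (PGL2 ℓ)) : Prop := Nonempty (H ≃* alternatingGroup (Fin 4))

/-- `H` is isomorphic to the symmetric group `S₄`. -/
def IsS4 {ℓ : ℕ} (H : Subgroup (PGL2 ℓ)) : Prop := Nonempty (H ≃* Equiv.Perm (Fin 4))

/-- `H` is isomorphic to the alternating group `A₅`. -/
def IsA5 {ℓ : ℕ} (H : Subgroup (PGL2 ℓ)) : Prop := Nonempty (H ≃* alternatingGroup (Fin 5))

section FiniteGroups

lemma exists_eq_triple_monotone {α β : Type*} [DecidableEq α] [LinearOrder β] {s : Finset α}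
    (hs : s.card = 3) (f : α → β) :
    ∃ a b c, a ≠ b ∧ a ≠ c ∧ b ≠ c ∧ s = {a, b, c} ∧ f a ≤ f b ∧ f b ≤ f c := by
  obtain ⟨c, hc, hmax⟩ := s.exists_max_image f (Finset.card_pos.1 (by omega))
  obtain ⟨a, b, hab, hs'⟩ := Finset.card_eq_two.1 (Finset.card_erase_of_mem hc ▸ by omega :
    (s.erase c).card = 2)
  wlog hle : f a ≤ f b generalizing a b
  · exact this b a hab.symm (hs'.trans (Finset.pair_comm a b)) (le_of_not_ge hle)
  have ha : a ∈ s.erase c := by simp [hs']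
  have hb : b ∈ s.erase c := by simp [hs']
  refine ⟨a, b, c, hab, Finset.ne_of_mem_erase ha, Finset.ne_of_mem_erase hb, ?_, hle,
    hmax b (Finset.mem_of_mem_erase hb)⟩
  rw [← Finset.insert_erase hc, hs']
  grind

lemma riemann_hurwitz_three_orbits {n m₁ m₂ m₃ c₁ c₂ c₃ : ℕ} (h₁ : m₁ * c₁ = n) (h₂ : m₂ * c₂ = n)
    (h₃ : m₃ * c₃ = n) (hc₁ : 1 < c₁) (h₁₂ : c₁ ≤ c₂) (h₂₃ : c₂ ≤ c₃)
    (hsum : m₁ + m₂ + m₃ = n + 2) :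
    m₃ = 2 ∨ (n = 12 ∧ c₁ = 2 ∧ c₂ = 3 ∧ c₃ = 3) ∨ (n = 24 ∧ c₁ = 2 ∧ c₂ = 3 ∧ c₃ = 4) ∨
      (n = 60 ∧ c₁ = 2 ∧ c₂ = 3 ∧ c₃ = 5) := by
  have hc₁' : c₁ = 2 := by
    by_contra hne
    have := Nat.mul_le_mul_left m₁ (show 3 ≤ c₁ by omega)
    have := Nat.mul_le_mul_left m₂ (show 3 ≤ c₂ by omega)
    have := Nat.mul_le_mul_left m₃ (show 3 ≤ c₃ by omega)
    omega
  subst hc₁'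
  have hc₂ : c₂ < 4 := by
    by_contra! hle
    have := Nat.mul_le_mul_left m₂ hle
    have := Nat.mul_le_mul_left m₃ (hle.trans h₂₃)
    omega
  obtain rfl | rfl : c₂ = 2 ∨ c₂ = 3 := by omega
  · exact Or.inl (by omega)
  have hc₃ : c₃ < 6 := by
    by_contra! hle
    have := Nat.mul_le_mul_left m₃ hle
    omega
  interval_cases c₃ <;> omega

lemma card_filter_mem_ne_one {G : Type*} [Group G] [Fintype G] [DecidableEq G] (K : Subgroup G)
    [DecidablePred (· ∈ K)] : ({g | g ∈ K ∧ g ≠ 1} : Finset G).card = Nat.card K - 1 := by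
  rw [← Set.ncard_coe_finset, ← SetLike.coe_sort_coe, Nat.card_coe_set_eq,
    ← Set.ncard_sdiff_singleton_of_mem K.one_mem]
  simp [Set.sdiff_eq, Set.ofPred_and, Set.compl_def]

lemma card_sylow_eq_pow {G : Type*} [Group G] [Finite G] {p k m : ℕ} [hp : Fact p.Prime]
    (P : Sylow p G) (hG : Nat.card G = p ^ k * m) (hm : ¬ p ∣ m) :
    Nat.card (P : Subgroup G) = p ^ k := by
  have hm0 : m ≠ 0 := by rintro rfl; simp at hm
  rw [P.card_eq_multiplicity, hG, Nat.factorization_mul (pow_ne_zero _ hp.out.ne_zero) hm0]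
  simp [hp.out.factorization_self, Nat.factorization_eq_zero_of_not_dvd hm]

lemma orderOf_eq_prime_iff_ne_one_of_mem {G : Type*} [Group G] {K : Subgroup G} {p : ℕ}
    (hp : p.Prime) (hK : Nat.card K = p) {g : G} (hg : g ∈ K) : orderOf g = p ↔ g ≠ 1 := by
  have hdvd : orderOf g ∣ p := hK ▸ Subgroup.orderOf_dvd_natCard K hg
  rw [← orderOf_eq_one_iff.ne]
  exact ⟨fun h ↦ h ▸ hp.one_lt.ne', fun hne ↦ ((Nat.dvd_prime hp).1 hdvd).resolve_left hne⟩

end FiniteGroups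

section Isomorphisms

variable {G α : Type*} [Group G] [Finite α] {f : G →* Equiv.Perm α}

lemma nonempty_mulEquiv_perm_fin (hf : Function.Injective f)
    (hG : Nat.card G = (Nat.card α).factorial) :
    Nonempty (G ≃* Equiv.Perm (Fin (Nat.card α))) := by
  have hbij : Function.Bijective f := (Nat.bijective_iff_injective_and_card f).2
    ⟨hf, hG.trans Nat.card_perm.symm⟩
  exact ⟨(MulEquiv.ofBijective f hbij).trans (Finite.equivFin α).permCongrHom⟩

lemma nonempty_mulEquiv_alternatingGroup_fin (hf : Function.Injective f)
    (hG : 2 * Nat.card G = (Nat.card α).factorial) :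
    Nonempty (G ≃* alternatingGroup (Fin (Nat.card α))) := by
  have := Fintype.ofFinite α
  classical
  have hrange : Nat.card f.range = Nat.card G :=
    (Nat.card_congr (MonoidHom.ofInjective hf).toEquiv).symm
  have hindex : f.range.index = 2 := by
    have hmul := f.range.card_mul_index
    rw [hrange, Nat.card_perm, ← hG, mul_comm 2] at hmul
    refine Nat.eq_of_mul_eq_mul_left (Nat.pos_of_ne_zero fun h0 ↦ ?_) hmul
    exact Nat.factorial_ne_zero (Nat.card α) (by rw [← hG, h0])
  exact ⟨(MonoidHom.ofInjective hf).trans <|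
    (MulEquiv.subgroupCongr (Equiv.Perm.eq_alternatingGroup_of_index_eq_two hindex)).trans
    (Finite.equivFin α).altCongrHom⟩

end Isomorphisms

section RotationGroups

open MulAction
open scoped Pointwise

variable {G α : Type*} [Group G] [MulAction G α]

lemma ncard_orbit_mul_card_stabilizer (x : α) :
    (orbit G x).ncard * Nat.card (stabilizer G x) = Nat.card G := by
  rw [← index_stabilizer, Subgroup.index_mul_card]

lemma card_stabilizer_eq_of_mem_orbit {x y : α} (h : y ∈ orbit G x) :
    Nat.card (stabilizer G y) = Nat.card (stabilizer G x) :=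
  Nat.card_congr (stabilizerEquivStabilizerOfOrbitRel h).toEquiv

lemma card_ker_toPermHom_mul_card_dvd [IsPretransitive G α] [Nonempty α] :
    Nat.card (toPermHom G α).ker * Nat.card α ∣ Nat.card G := by
  obtain ⟨x⟩ := ‹Nonempty α›
  have hle : (toPermHom G α).ker ≤ stabilizer G x := fun g hg ↦ by
    simpa using congr($hg x)
  rw [← index_stabilizer_of_transitive G x, ← (stabilizer G x).card_mul_index]
  exact Nat.mul_dvd_mul_right (Subgroup.card_dvd_of_le hle) _

lemma card_lt_four_of_sum_ncard_orbit [Finite G] {R : Finset α}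
    (hstab : ∀ x ∈ R, 1 < Nat.card (stabilizer G x))
    (hsum : ∑ x ∈ R, (orbit G x).ncard + 2 * Nat.card G = R.card * Nat.card G + 2) :
    R.card < 4 := by
  have : 0 < Nat.card G := Nat.card_pos
  have hle : ∑ x ∈ R, (orbit G x).ncard * 2 ≤ R.card * Nat.card G := by
    rw [← smul_eq_mul R.card]
    exact Finset.sum_le_card_nsmul _ _ _ fun x hx ↦
      (Nat.mul_le_mul_left _ (hstab x hx)).trans (ncard_orbit_mul_card_stabilizer x).le
  rw [← Finset.sum_mul] at hle
  by_contra! hR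
  have := Nat.mul_le_mul_right (Nat.card G) hR
  omega

/-- The action of `G` on `α` looks like that of a group of rotations on the sphere: every
nontrivial element fixes exactly two points, called its poles. -/
def FixesTwoPoints (G α : Type*) [Group G] [MulAction G α] : Prop :=
  ∀ g : G, g ≠ 1 → (fixedBy α g).ncard = 2

/-- The group permutes the two poles of one of its nontrivial elements, as a cyclic or dihedral
group of rotations does. -/
def PreservesAxis (G α : Type*) [Group G] [MulAction G α] : Prop :=
  ∃ h : G, h ≠ 1 ∧ ∀ g : G, g • fixedBy α h = fixedBy α h

/-- The points with nontrivial stabilizer form three (possibly equal) orbits, whose points have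
stabilizers of orders `a`, `b` and `c`. -/
def HasSignature (G α : Type*) [Group G] [MulAction G α] (a b c : ℕ) : Prop :=
  ∃ x y z : α, Nat.card (stabilizer G x) = a ∧ Nat.card (stabilizer G y) = b ∧
    Nat.card (stabilizer G z) = c ∧
    ∀ w, 1 < Nat.card (stabilizer G w) → w ∈ orbit G x ∨ w ∈ orbit G y ∨ w ∈ orbit G z

theorem PreservesAxis.of_normal_card_eq_two {K : Subgroup G} [K.Normal] (hK : Nat.card K = 2) :
    PreservesAxis G α := by
  obtain ⟨⟨k, hkK⟩, hk, huniq⟩ := (Nat.card_eq_two_iff' (1 : K)).1 hK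
  have hk1 : k ≠ 1 := fun h ↦ hk (Subtype.ext h)
  refine ⟨k, hk1, fun g ↦ fixedBy_mem_fixedBy_of_commute ?_⟩
  have hconj := huniq ⟨g * k * g⁻¹, Subgroup.Normal.conj_mem ‹_› k hkK g⟩ (by simpa using hk1)
  exact (mul_inv_eq_iff_eq_mul.1 congr(($hconj : G))).symm

namespace HasSignature

variable [Finite G]

lemma card_stabilizer_eq {a b c : ℕ} (h : HasSignature G α a b c) (w : α) :
    Nat.card (stabilizer G w) = 1 ∨ Nat.card (stabilizer G w) = a ∨
      Nat.card (stabilizer G w) = b ∨ Nat.card (stabilizer G w) = c := by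
  obtain ⟨x, y, z, rfl, rfl, rfl, hw⟩ := h
  obtain hw1 | hw1 : Nat.card (stabilizer G w) = 1 ∨ 1 < Nat.card (stabilizer G w) := by
    have : 0 < Nat.card (stabilizer G w) := Nat.card_pos
    omega
  · exact .inl hw1
  · exact .inr ((hw w hw1).imp card_stabilizer_eq_of_mem_orbit
      (Or.imp card_stabilizer_eq_of_mem_orbit card_stabilizer_eq_of_mem_orbit))

lemma card_stabilizer_eq_three (h : HasSignature G α 2 3 4) (w : α)
    (hw : 3 ∣ Nat.card (stabilizer G w)) : Nat.card (stabilizer G w) = 3 := by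
  have := h.card_stabilizer_eq w
  omega

lemma card_stabilizer_eq_prime (h : HasSignature G α 2 3 5) {p : ℕ} (hp : p.Prime) (w : α)
    (hw : p ∣ Nat.card (stabilizer G w)) : Nat.card (stabilizer G w) = p := by
  rcases h.card_stabilizer_eq w with hc | hc | hc | hc <;> rw [hc] at hw ⊢
  · exact absurd hw hp.not_dvd_one
  all_goals exact ((Nat.prime_dvd_prime_iff_eq hp (by norm_num)).1 hw).symm

end HasSignature

namespace FixesTwoPoints

theorem exists_smul_eq (h : FixesTwoPoints G α) {g : G} (hg : g ≠ 1) : ∃ x : α, g • x = x :=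
  Set.nonempty_of_ncard_ne_zero (s := fixedBy α g) (by rw [h g hg]; simp)

theorem finite_fixedBy (h : FixesTwoPoints G α) {g : G} (hg : g ≠ 1) : (fixedBy α g).Finite :=
  Set.finite_of_ncard_ne_zero (by rw [h g hg]; simp)

theorem sum_ncard_orbit [Finite G] [Finite α] [Fintype (orbitRel.Quotient G α)]
    (h : FixesTwoPoints G α) :
    ∑ ω : orbitRel.Quotient G α, (orbit G ω.out).ncard + 2 * Nat.card G =
      Fintype.card (orbitRel.Quotient G α) * Nat.card G + 2 := by
  classical
  have := Fintype.ofFinite G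
  have := Fintype.ofFinite α
  have hα : ∑ ω : orbitRel.Quotient G α, (orbit G ω.out).ncard = Nat.card α := by
    simp_rw [Nat.card_congr (selfEquivSigmaOrbits G α), Nat.card_sigma, Nat.card_coe_set_eq]
  have burnside := sum_card_fixedBy_eq_card_orbits_mul_card_group G α
  rw [← Finset.add_sum_erase _ _ (Finset.mem_univ 1), Finset.sum_congr rfl (g := fun _ ↦ 2)]
    at burnside
  · simp only [fixedBy_one_eq_univ, Finset.sum_const, Finset.card_erase_of_mem (Finset.mem_univ _),
      Finset.card_univ, Fintype.card_setUniv, smul_eq_mul] at burnside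
    have : 0 < Fintype.card G := Fintype.card_pos
    simp only [hα, Nat.card_eq_fintype_card, orbitRel.Quotient, ← burnside]
    omega
  · intro g hg
    rw [← h g (Finset.ne_of_mem_erase hg), ← Nat.card_coe_set_eq, Nat.card_eq_fintype_card]

theorem exists_pole_representatives [Finite G] [Finite α] (h : FixesTwoPoints G α) :
    ∃ R : Finset α, (∀ x ∈ R, 1 < Nat.card (stabilizer G x)) ∧
      (∀ y, 1 < Nat.card (stabilizer G y) → ∃ x ∈ R, y ∈ orbit G x) ∧
      ∑ x ∈ R, (orbit G x).ncard + 2 * Nat.card G = R.card * Nat.card G + 2 := by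
  classical
  have := Fintype.ofFinite (orbitRel.Quotient G α)
  let p (ω : orbitRel.Quotient G α) : Prop := 1 < Nat.card (stabilizer G ω.out)
  refine ⟨({ω | p ω} : Finset _).image Quotient.out, ?_, fun y hy ↦ ?_, ?_⟩
  · simp +contextual [p]
  · have hmem : y ∈ orbit G (Quotient.mk (orbitRel G α) y).out :=
      Setoid.symm' (orbitRel G α) (Quotient.mk_out y)
    refine ⟨_, Finset.mem_image_of_mem _ (Finset.mem_filter.2 ⟨Finset.mem_univ _, ?_⟩), hmem⟩
    rwa [card_stabilizer_eq_of_mem_orbit hmem] at hy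
  · have free : ∀ ω ∈ ({ω | ¬ p ω} : Finset _), (orbit G ω.out).ncard = Nat.card G := by
      intro ω hω
      have hone : Nat.card (stabilizer G ω.out) = 1 :=
        le_antisymm (not_lt.1 (Finset.mem_filter.1 hω).2) Nat.card_pos
      rw [← ncard_orbit_mul_card_stabilizer ω.out, hone, mul_one]
    have total := h.sum_ncard_orbit
    rw [← Finset.sum_filter_add_sum_filter_not _ p, Finset.sum_congr rfl free, Finset.sum_const,
      ← Finset.card_univ,
      ← Finset.card_filter_add_card_filter_not (s := Finset.univ) p, smul_eq_mul] at total
    rw [Finset.sum_image (Quotient.out_injective.injOn),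
      Finset.card_image_of_injective _ Quotient.out_injective]
    linarith

theorem preservesAxis_of_smul_eq (h : FixesTwoPoints G α) {s : Set α} (hs : s.ncard = 2)
    (hinv : ∀ g : G, g • s = s) {x : α} (hx : x ∈ s) (hstab : 1 < Nat.card (stabilizer G x)) :
    PreservesAxis G α := by
  have : Finite (stabilizer G x) := Nat.finite_of_card_ne_zero (by omega)
  obtain ⟨⟨k, hk⟩, hk'⟩ :=
    Subgroup.ne_bot_iff_exists_ne_one.1 ((Subgroup.one_lt_card_iff_ne_bot _).1 hstab)
  have hk1 : k ≠ 1 := fun h ↦ hk' (Subtype.ext h)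
  obtain ⟨y, hyx, rfl⟩ : ∃ y, x ≠ y ∧ s = {x, y} := by
    obtain ⟨a, b, hab, rfl⟩ := Set.ncard_eq_two.1 hs
    rcases hx with rfl | rfl
    · exact ⟨b, hab, rfl⟩
    · exact ⟨a, hab.symm, Set.pair_comm a x⟩
  have hky : k • y = y := by
    have hmem : k • y ∈ ({x, y} : Set α) := hinv k ▸ Set.smul_mem_smul_set (by simp)
    refine hmem.resolve_left fun hkyx ↦ hyx ?_
    exact (smul_left_cancel k (hkyx.trans (mem_stabilizer_iff.1 hk).symm)).symm
  have hfix : {x, y} = fixedBy α k := by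
    refine Set.eq_of_subset_of_ncard_le (Set.pair_subset hk hky) (by rw [hs, h k hk1])
      (Set.finite_of_ncard_ne_zero (by rw [h k hk1]; simp))
  exact ⟨k, hk1, hfix ▸ hinv⟩

theorem preservesAxis_of_ncard_orbit_eq_one (h : FixesTwoPoints G α) {x y : α} (hxy : x ≠ y)
    (hx : (orbit G x).ncard = 1) (hy : (orbit G y).ncard = 1)
    (hstab : 1 < Nat.card (stabilizer G x)) : PreservesAxis G α := by
  obtain ⟨x', hx'⟩ := Set.ncard_eq_one.1 hx
  obtain ⟨y', hy'⟩ := Set.ncard_eq_one.1 hy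
  obtain rfl : x = x' := by simpa [hx'] using mem_orbit_self (M := G) x
  obtain rfl : y = y' := by simpa [hy'] using mem_orbit_self (M := G) y
  refine h.preservesAxis_of_smul_eq (Set.ncard_pair hxy) (fun g ↦ ?_) (Set.mem_insert x _) hstab
  rw [Set.insert_eq, ← hx', ← hy', Set.smul_set_union, smul_orbit, smul_orbit]

theorem subsingleton_or_preservesAxis_or_hasSignature [Finite G] [Finite α]
    (h : FixesTwoPoints G α) :
    Subsingleton G ∨ PreservesAxis G α ∨ (Nat.card G = 12 ∧ HasSignature G α 2 3 3) ∨
      (Nat.card G = 24 ∧ HasSignature G α 2 3 4) ∨ (Nat.card G = 60 ∧ HasSignature G α 2 3 5) := by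
  classical
  obtain ⟨R, hstab, hcover, hsum⟩ := h.exists_pole_representatives
  have horbit (x : α) : (orbit G x).ncard * Nat.card (stabilizer G x) = Nat.card G :=
    ncard_orbit_mul_card_stabilizer x
  have hpos (x : α) : 0 < (orbit G x).ncard :=
    Nat.pos_of_mul_pos_right (horbit x ▸ Nat.card_pos (α := G))
  have hlt := card_lt_four_of_sum_ncard_orbit hstab hsum
  obtain hR | hR | hR | hR : R.card = 0 ∨ R.card = 1 ∨ R.card = 2 ∨ R.card = 3 := by omega
  · rw [Finset.card_eq_zero.1 hR, Finset.sum_empty, Finset.card_empty] at hsum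
    exact .inl (Finite.card_le_one_iff_subsingleton.1 (by omega))
  · obtain ⟨x, rfl⟩ := Finset.card_eq_one.1 hR
    rw [Finset.sum_singleton, hR] at hsum
    exact .inl (Finite.card_le_one_iff_subsingleton.1 (by have := hpos x; omega))
  · obtain ⟨x, y, hxy, rfl⟩ := Finset.card_eq_two.1 hR
    rw [Finset.sum_pair hxy, hR] at hsum
    have := hpos x
    have := hpos y
    exact .inr <| .inl <| h.preservesAxis_of_ncard_orbit_eq_one hxy (by omega) (by omega)
      (hstab x (by simp))
  · obtain ⟨x, y, z, hxy, hxz, hyz, rfl, hle₁, hle₂⟩ :=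
      exists_eq_triple_monotone hR fun x ↦ Nat.card (stabilizer G x)
    rw [hR, Finset.sum_insert (by simp [hxy, hxz]), Finset.sum_pair hyz] at hsum
    have hsig : HasSignature G α (Nat.card (stabilizer G x)) (Nat.card (stabilizer G y))
        (Nat.card (stabilizer G z)) := ⟨x, y, z, rfl, rfl, rfl, by simpa using hcover⟩
    rcases riemann_hurwitz_three_orbits (horbit x) (horbit y) (horbit z) (hstab x (by simp))
      hle₁ hle₂ (by omega) with hz | ⟨hn, h₁, h₂, h₃⟩ | ⟨hn, h₁, h₂, h₃⟩ | ⟨hn, h₁, h₂, h₃⟩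
    · exact .inr <| .inl <| h.preservesAxis_of_smul_eq hz (fun g ↦ smul_orbit g z)
        (mem_orbit_self z) (hstab z (by simp))
    all_goals rw [h₁, h₂, h₃] at hsig; simp [hn, hsig]

theorem injective_toPermHom_orbit (h : FixesTwoPoints G α) {x : α} (hx : 2 < (orbit G x).ncard) :
    Function.Injective (toPermHom G (orbit G x)) := by
  rw [injective_iff_map_eq_one]
  intro g hg
  by_contra hg1
  have hsub : orbit G x ⊆ fixedBy α g := fun y hy ↦ congr(($hg ⟨y, hy⟩ : α))
  exact hx.not_ge ((Set.ncard_le_ncard hsub (h.finite_fixedBy hg1)).trans (h g hg1).le)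

theorem nonempty_mulEquiv_alternatingGroup_four (h : FixesTwoPoints G α) (hG : Nat.card G = 12)
    (hsig : HasSignature G α 2 3 3) : Nonempty (G ≃* alternatingGroup (Fin 4)) := by
  obtain ⟨-, -, z, -, -, hz, -⟩ := hsig
  have hcard : (orbit G z).ncard = 4 := by
    have := ncard_orbit_mul_card_stabilizer (G := G) z
    rw [hG, hz] at this
    omega
  have hinj := h.injective_toPermHom_orbit (hcard ▸ by norm_num : 2 < (orbit G z).ncard)
  rw [← Nat.card_coe_set_eq] at hcard
  have : Finite (orbit G z) := Nat.finite_of_card_ne_zero (by omega)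
  exact hcard ▸ nonempty_mulEquiv_alternatingGroup_fin hinj (by rw [hG, hcard]; rfl)

theorem ncard_orbit_mul_le_of_stabilizer_le [Finite G] (h : FixesTwoPoints G α)
    {K : Subgroup G} [K.Normal] {x : α} (hx : stabilizer G x ≤ K) :
    (orbit G x).ncard * (Nat.card (stabilizer G x) - 1) ≤ (Nat.card K - 1) * 2 := by
  classical
  have := Fintype.ofFinite G
  rw [Set.ncard_eq_toFinset_card (orbit G x) (Set.finite_range _), ← card_filter_mem_ne_one K]
  refine Finset.card_mul_le_card_mul (fun (y : α) (g : G) ↦ g • y = y) (fun y hy ↦ ?_)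
    fun g hg ↦ ?_
  · obtain ⟨a, rfl⟩ : y ∈ orbit G x := (Set.Finite.mem_toFinset _).1 hy
    dsimp only
    rw [← card_stabilizer_eq_of_mem_orbit (mem_orbit x a), ← card_filter_mem_ne_one]
    refine Finset.card_le_card fun g hg ↦ ?_
    obtain ⟨hgy, hg1⟩ : g • a • x = a • x ∧ g ≠ 1 := by simpa using hg
    have hconj : a⁻¹ * g * a ∈ K := hx (by simp [mul_smul, hgy])
    have hgK : g ∈ K := by simpa [mul_assoc] using Subgroup.Normal.conj_mem ‹_› _ hconj a
    simpa [Finset.bipartiteAbove, hgy, hg1]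
  · have hg1 : g ≠ 1 := by simp_all
    rw [← h g hg1, ← Set.ncard_coe_finset]
    refine Set.ncard_le_ncard (fun y hy ↦ ?_) (h.finite_fixedBy hg1)
    simp_all [Finset.bipartiteBelow]

-- An element of order `p` of `K` generates the stabilizer of each of its poles, so `K` contains
-- that stabilizer and all its conjugates. Count the pairs of a pole and a nontrivial element.
theorem card_add_four_le_four_mul_card [Finite G] (h : FixesTwoPoints G α) {K : Subgroup G}
    [K.Normal] {p : ℕ} (hp : p.Prime) (hpK : p ∣ Nat.card K)
    (hstab : ∀ x : α, p ∣ Nat.card (stabilizer G x) → Nat.card (stabilizer G x) = p) :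
    Nat.card G + 4 ≤ 4 * Nat.card K := by
  have : Fact p.Prime := ⟨hp⟩
  obtain ⟨⟨k, hkK⟩, hk⟩ := exists_prime_orderOf_dvd_card' p hpK
  rw [Subgroup.orderOf_mk] at hk
  have hk1 : k ≠ 1 := fun h ↦ hp.one_lt.ne' (by rw [← hk, h, orderOf_one])
  obtain ⟨x, hx⟩ := h.exists_smul_eq hk1
  have hzpowers : Subgroup.zpowers k ≤ stabilizer G x := by simpa using hx
  have hcard := hstab x (hk ▸ Nat.card_zpowers k ▸ Subgroup.card_dvd_of_le hzpowers)
  have hxK : stabilizer G x ≤ K := by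
    rw [← Subgroup.eq_of_le_of_card_ge hzpowers (by rw [hcard, Nat.card_zpowers, hk])]
    simpa using hkK
  have hle := h.ncard_orbit_mul_le_of_stabilizer_le hxK
  have horbit := ncard_orbit_mul_card_stabilizer (G := G) x
  have hpos : 0 < Nat.card K := Nat.card_pos
  rw [hcard] at hle horbit
  obtain ⟨q, rfl⟩ := Nat.exists_eq_add_of_le hp.two_le
  rw [show 2 + q - 1 = 1 + q by omega] at hle
  have : Nat.card G ≤ 2 * ((orbit G x).ncard * (1 + q)) := by rw [← horbit]; nlinarith
  omega

theorem card_sylow_three_eq_four (h : FixesTwoPoints G α) (hG : Nat.card G = 24)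
    (hsig : HasSignature G α 2 3 4) : Nat.card (Sylow 3 G) = 4 := by
  have : Finite G := Nat.finite_of_card_ne_zero (by omega)
  obtain ⟨P⟩ : Nonempty (Sylow 3 G) := inferInstance
  have hP : Nat.card (P : Subgroup G) = 3 :=
    card_sylow_eq_pow P (k := 1) (m := 8) (by rw [hG]; rfl) (by norm_num)
  have hne : Nat.card (Sylow 3 G) ≠ 1 := fun hone ↦ by
    have : Subsingleton (Sylow 3 G) := (Nat.card_eq_one_iff_unique.1 hone).1
    have := P.normal_of_subsingleton
    have := h.card_add_four_le_four_mul_card Nat.prime_three hP.symm.dvd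
      hsig.card_stabilizer_eq_three
    omega
  have hmod : Nat.card (Sylow 3 G) % 3 = 1 := card_sylow_modEq_one 3 G
  have hdvd : Nat.card (Sylow 3 G) ∣ 8 := by
    have hmul := (P : Subgroup G).card_mul_index
    rw [hP, hG] at hmul
    have hindex := P.card_dvd_index
    rwa [show (P : Subgroup G).index = 8 by omega] at hindex
  have := Nat.le_of_dvd (by norm_num) hdvd
  interval_cases Nat.card (Sylow 3 G) <;> omega

theorem nonempty_mulEquiv_perm_four (h : FixesTwoPoints G α) (hG : Nat.card G = 24)
    (hsig : HasSignature G α 2 3 4) :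
    PreservesAxis G α ∨ Nonempty (G ≃* Equiv.Perm (Fin 4)) := by
  have : Finite G := Nat.finite_of_card_ne_zero (by omega)
  have hcard := h.card_sylow_three_eq_four hG hsig
  set K := (toPermHom G (Sylow 3 G)).ker
  have hdvd6 : Nat.card K ∣ 6 := by
    have := card_ker_toPermHom_mul_card_dvd (G := G) (α := Sylow 3 G)
    rw [hcard, hG] at this
    exact Nat.dvd_of_mul_dvd_mul_right (by norm_num) this
  have h3 : ¬ 3 ∣ Nat.card K := fun hdvd ↦ by
    have := h.card_add_four_le_four_mul_card Nat.prime_three hdvd hsig.card_stabilizer_eq_three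
    have := Nat.le_of_dvd (by norm_num) hdvd6
    omega
  obtain hK1 | hK2 : Nat.card K = 1 ∨ Nat.card K = 2 := by
    have := Nat.le_of_dvd (by norm_num) hdvd6
    interval_cases Nat.card K <;> omega
  · have hinj := (MonoidHom.ker_eq_bot_iff _).1 (Subgroup.card_eq_one.1 hK1)
    exact .inr (hcard ▸ nonempty_mulEquiv_perm_fin hinj (by rw [hG, hcard]; rfl))
  · exact .inl (.of_normal_card_eq_two hK2)

theorem card_centralizer_le [Finite G] (h : FixesTwoPoints G α) {g : G} (hg : g ≠ 1) {x : α}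
    (hx : g • x = x) :
    Nat.card (Subgroup.centralizer {g}) ≤ 2 * Nat.card (stabilizer G x) := by
  rw [← ncard_orbit_mul_card_stabilizer x]
  refine Nat.mul_le_mul ?_ ?_
  · rw [← h g hg]
    refine Set.ncard_le_ncard ?_ (h.finite_fixedBy hg)
    rintro _ ⟨⟨k, hk⟩, rfl⟩
    have hkg : k * g = g * k := Subgroup.mem_centralizer_singleton_iff.1 hk
    change g • k • x = k • x
    rw [← mul_smul, ← hkg, mul_smul, hx]
  · exact Nat.card_le_card_of_injective
      (fun k : stabilizer (Subgroup.centralizer {g}) x ↦ (⟨k.1.1, k.2⟩ : stabilizer G x))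
      fun k l hkl ↦ Subtype.ext (Subtype.ext congr(($hkl : G)))

theorem ncard_orderOf_eq_prime_mul_two [Finite G] (h : FixesTwoPoints G α) {p : ℕ} (hp : p.Prime)
    {x : α} (hx : Nat.card (stabilizer G x) = p)
    (hmem : ∀ y : α, p ∣ Nat.card (stabilizer G y) → y ∈ orbit G x) :
    {g : G | orderOf g = p}.ncard * 2 = (orbit G x).ncard * (p - 1) := by
  classical
  have := Fintype.ofFinite G
  have horbit : (orbit G x).Finite := Set.finite_range _
  rw [Set.ncard_eq_toFinset_card' {g : G | orderOf g = p},
    Set.ncard_eq_toFinset_card (orbit G x) horbit]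
  refine Finset.card_mul_eq_card_mul (fun (g : G) (y : α) ↦ g • y = y) (fun g hg ↦ ?_)
    fun y hy ↦ ?_
  · have hgp : orderOf g = p := by simpa using hg
    have hg1 : g ≠ 1 := fun h1 ↦ hp.one_lt.ne (by rw [← hgp, h1, orderOf_one])
    rw [← h g hg1, ← Set.ncard_coe_finset]
    congr 1
    ext y
    have (hy : g • y = y) : y ∈ orbit G x :=
      hmem y (hgp ▸ Subgroup.orderOf_dvd_natCard _ (mem_stabilizer_iff.2 hy))
    simp only [Finset.bipartiteAbove, Finset.coe_filter, Set.Finite.mem_toFinset, Set.mem_ofPred_eq,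
      mem_fixedBy]
    tauto
  · have hstab : Nat.card (stabilizer G y) = p := by
      rw [card_stabilizer_eq_of_mem_orbit (horbit.mem_toFinset.1 hy), hx]
    have hcard := card_filter_mem_ne_one (stabilizer G y)
    rw [hstab] at hcard
    rw [← hcard]
    congr 1
    ext g
    have (hg : g • y = y) : orderOf g = p ↔ g ≠ 1 :=
      orderOf_eq_prime_iff_ne_one_of_mem hp hstab (mem_stabilizer_iff.2 hg)
    simp only [Finset.bipartiteBelow, Finset.mem_filter, Finset.mem_univ, true_and,
      Set.mem_toFinset, Set.mem_ofPred_eq, mem_stabilizer_iff]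
    tauto

theorem orderOf_eq_two_and_eq_centralizer (h : FixesTwoPoints G α) (hG : Nat.card G = 60)
    (hsig : HasSignature G α 2 3 5) {P : Sylow 2 G} {g : G} (hgP : g ∈ P) (hg : g ≠ 1) :
    orderOf g = 2 ∧ P = Subgroup.centralizer {g} := by
  have : Finite G := Nat.finite_of_card_ne_zero (by omega)
  have hP : Nat.card (P : Subgroup G) = 2 ^ 2 :=
    card_sylow_eq_pow P (m := 15) (by rw [hG]; rfl) (by norm_num)
  obtain ⟨x, hx⟩ := h.exists_smul_eq hg
  have hg4 : orderOf g ∣ 2 ^ 2 := hP ▸ Subgroup.orderOf_dvd_natCard _ hgP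
  have hgx : orderOf g ∣ Nat.card (stabilizer G x) :=
    Subgroup.orderOf_dvd_natCard _ (mem_stabilizer_iff.2 hx)
  have h2 : 2 ∣ orderOf g := by
    obtain ⟨i, -, hi⟩ := (Nat.dvd_prime_pow Nat.prime_two).1 hg4
    rw [hi]
    exact dvd_pow_self 2 fun hi0 ↦ hg (orderOf_eq_one_iff.1 (by rw [hi, hi0, pow_zero]))
  have hstab := hsig.card_stabilizer_eq_prime Nat.prime_two x (h2.trans hgx)
  refine ⟨Nat.dvd_antisymm (hstab ▸ hgx) h2, Subgroup.eq_of_le_of_card_ge (fun k hk ↦ ?_) ?_⟩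
  · have := IsPGroup.isMulCommutative_of_card_eq_prime_sq hP
    exact Subgroup.mem_centralizer_singleton_iff.2
      congr(($(mul_comm' (⟨k, hk⟩ : (P : Subgroup G)) ⟨g, hgP⟩) : G))
  · exact (h.card_centralizer_le hg hx).trans (by rw [hP, hstab]; norm_num)

theorem ncard_orderOf_eq_two_eq_fifteen (h : FixesTwoPoints G α) (hG : Nat.card G = 60)
    (hsig : HasSignature G α 2 3 5) : {g : G | orderOf g = 2}.ncard = 15 := by
  have : Finite G := Nat.finite_of_card_ne_zero (by omega)
  obtain ⟨x, y, z, hx, hy, hz, hmem⟩ := hsig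
  have hcount := h.ncard_orderOf_eq_prime_mul_two Nat.prime_two hx fun w hw ↦ by
    have := Nat.le_of_dvd Nat.card_pos hw
    refine (hmem w (by omega)).resolve_right fun hw' ↦ ?_
    have := hw'.imp card_stabilizer_eq_of_mem_orbit card_stabilizer_eq_of_mem_orbit
    omega
  have horbit := ncard_orbit_mul_card_stabilizer (G := G) x
  rw [hG, hx] at horbit
  omega

theorem existsUnique_mem_sylow_two (h : FixesTwoPoints G α) (hG : Nat.card G = 60)
    (hsig : HasSignature G α 2 3 5) {g : G} (hg : orderOf g = 2) :
    ∃! P : Sylow 2 G, g ∈ P := by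
  have hg1 : g ≠ 1 := fun h1 ↦ by simp [h1] at hg
  have hpgroup : IsPGroup 2 (Subgroup.zpowers g) :=
    .of_card (n := 1) (by rw [Nat.card_zpowers, hg, pow_one])
  obtain ⟨P, hP⟩ := hpgroup.exists_le_sylow
  have hgP : g ∈ P := hP (Subgroup.mem_zpowers g)
  refine ⟨P, hgP, fun Q hgQ ↦ Sylow.ext ?_⟩
  rw [(h.orderOf_eq_two_and_eq_centralizer hG hsig hgP hg1).2,
    (h.orderOf_eq_two_and_eq_centralizer hG hsig hgQ hg1).2]

theorem card_sylow_two_eq_five (h : FixesTwoPoints G α) (hG : Nat.card G = 60)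
    (hsig : HasSignature G α 2 3 5) : Nat.card (Sylow 2 G) = 5 := by
  classical
  have : Finite G := Nat.finite_of_card_ne_zero (by omega)
  have := Fintype.ofFinite G
  have := Fintype.ofFinite (Sylow 2 G)
  have hcount : (Finset.univ : Finset (Sylow 2 G)).card * 3 =
      {g : G | orderOf g = 2}.toFinset.card * 1 := by
    refine Finset.card_mul_eq_card_mul (fun P g ↦ g ∈ P) (fun P _ ↦ ?_) fun g hg ↦ ?_
    · have hcard := card_filter_mem_ne_one (P : Subgroup G)
      rw [card_sylow_eq_pow P (k := 2) (m := 15) (by rw [hG]; rfl) (by norm_num)] at hcard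
      rw [← show 2 ^ 2 - 1 = 3 from rfl, ← hcard]
      congr 1
      ext g
      have (hgP : g ∈ P) (hg : g ≠ 1) : orderOf g = 2 :=
        (h.orderOf_eq_two_and_eq_centralizer hG hsig hgP hg).1
      have (hg2 : orderOf g = 2) : g ≠ 1 := fun hg ↦ by simp [hg] at hg2
      simp only [Finset.bipartiteAbove, Finset.mem_filter, Set.mem_toFinset, Set.mem_ofPred_eq,
        Finset.mem_univ, true_and]
      tauto
    · obtain ⟨P, hP, huniq⟩ := h.existsUnique_mem_sylow_two hG hsig (by simpa using hg)
      refine Finset.card_eq_one.2 ⟨P, Finset.eq_singleton_iff_unique_mem.2 ?_⟩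
      simpa [Finset.bipartiteBelow] using ⟨hP, huniq⟩
  rw [← Set.ncard_eq_toFinset_card', h.ncard_orderOf_eq_two_eq_fifteen hG hsig, Finset.card_univ,
    ← Nat.card_eq_fintype_card] at hcount
  omega

theorem nonempty_mulEquiv_alternatingGroup_five (h : FixesTwoPoints G α) (hG : Nat.card G = 60)
    (hsig : HasSignature G α 2 3 5) : Nonempty (G ≃* alternatingGroup (Fin 5)) := by
  have : Finite G := Nat.finite_of_card_ne_zero (by omega)
  have hcard := h.card_sylow_two_eq_five hG hsig
  set K := (toPermHom G (Sylow 2 G)).ker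
  have hdvd : Nat.card K ∣ 12 := by
    have := card_ker_toPermHom_mul_card_dvd (G := G) (α := Sylow 2 G)
    rw [hcard, hG] at this
    exact Nat.dvd_of_mul_dvd_mul_right (by norm_num) this
  have hK1 : Nat.card K = 1 := by
    by_contra hK1
    obtain ⟨p, hp, hpK⟩ := Nat.exists_prime_and_dvd hK1
    have := h.card_add_four_le_four_mul_card hp hpK (hsig.card_stabilizer_eq_prime hp)
    have := Nat.le_of_dvd (by norm_num) hdvd
    omega
  have hinj := (MonoidHom.ker_eq_bot_iff _).1 (Subgroup.card_eq_one.1 hK1)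
  exact hcard ▸ nonempty_mulEquiv_alternatingGroup_fin hinj (by rw [hG, hcard]; rfl)

theorem subsingleton_or_preservesAxis_or_nonempty_mulEquiv [Finite G] [Finite α]
    (h : FixesTwoPoints G α) :
    Subsingleton G ∨ PreservesAxis G α ∨ Nonempty (G ≃* alternatingGroup (Fin 4)) ∨
      Nonempty (G ≃* Equiv.Perm (Fin 4)) ∨ Nonempty (G ≃* alternatingGroup (Fin 5)) := by
  rcases h.subsingleton_or_preservesAxis_or_hasSignature with
    htriv | haxis | ⟨hG, hsig⟩ | ⟨hG, hsig⟩ | ⟨hG, hsig⟩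
  · exact .inl htriv
  · exact .inr (.inl haxis)
  · exact .inr (.inr (.inl (h.nonempty_mulEquiv_alternatingGroup_four hG hsig)))
  · have := h.nonempty_mulEquiv_perm_four hG hsig
    tauto
  · exact .inr (.inr (.inr (.inr (h.nonempty_mulEquiv_alternatingGroup_five hG hsig))))

end FixesTwoPoints

end RotationGroups

section ProjectiveLine

open MulAction
open scoped Pointwise MatrixGroups
open ProjGenLinGroup (mk mk_eq_one mk_surjective)

variable {F K : Type*} [Field F] [Field K] [Algebra F K]

/-- The nonsplit Cartan subgroup `C_ns` attached to a nonsquare `δ`, as a set of matrices. -/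
def nonsplitCartan (δ : F) : Set (GL (Fin 2) F) :=
  {g | g 1 1 = g 0 0 ∧ g 0 1 = δ * g 1 0}

/-- The normalizer `N_ns` of `nonsplitCartan δ`, as a set of matrices. -/
def nonsplitCartanNormalizer (δ : F) : Set (GL (Fin 2) F) :=
  nonsplitCartan δ ∪ {g | g 1 1 = -g 0 0 ∧ g 0 1 = -(δ * g 1 0)}

variable (K) in
/-- The square roots of `δ` in `K`, seen on the projective line: the points fixed by the whole of
`nonsplitCartan δ`. -/
def nonsplitCartanPoles (δ : F) : Set (OnePoint K) :=
  (↑) '' {z : K | z ^ 2 = algebraMap F K δ}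

variable {δ : F}

lemma mem_nonsplitCartan_of_mk_eq_one {g : GL (Fin 2) F} (hg : mk g = 1) (δ : F) :
    g ∈ nonsplitCartan δ := by
  rw [mk_eq_one, GeneralLinearGroup.center_eq_range_scalar] at hg
  obtain ⟨u, rfl⟩ := hg
  simp [nonsplitCartan]

lemma apply_one_zero_ne_zero_of_mem_nonsplitCartan {g : GL (Fin 2) F}
    (hg : g ∈ nonsplitCartan δ) (hg1 : mk g ≠ 1) : g 1 0 ≠ 0 := fun h0 ↦ hg1 <| by
  rw [mk_eq_one, GeneralLinearGroup.mem_center_iff_val_mem_range_scalar]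
  refine ⟨g 0 0, ?_⟩
  ext i j
  fin_cases i <;> fin_cases j <;> simp [hg.1, hg.2, h0]

lemma ncard_nonsplitCartanPoles (hF : ringChar F ≠ 2) (hδ : δ ≠ 0) {ω : K}
    (hω : ω ^ 2 = algebraMap F K δ) : (nonsplitCartanPoles K δ).ncard = 2 := by
  have hω0 : ω ≠ 0 := fun h0 ↦ hδ (by simpa [h0] using hω.symm)
  have hneg : ω ≠ -ω := fun h ↦ hω0 <|
    (Ring.eq_self_iff_eq_zero_of_char_ne_two (Algebra.ringChar_eq F K ▸ hF)).1 h.symm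
  rw [nonsplitCartanPoles, Set.ncard_image_of_injective _ OnePoint.coe_injective, ← hω]
  simp_rw [sq_eq_sq_iff_eq_or_eq_neg]
  exact Set.ncard_pair hneg

lemma eq_zero_and_eq_zero_of_mul_add_eq_zero (hδ : ¬ IsSquare δ) {ω : K}
    (hω : ω ^ 2 = algebraMap F K δ) {s t : F} (h : algebraMap F K s * ω + algebraMap F K t = 0) :
    s = 0 ∧ t = 0 := by
  have hnorm : s ^ 2 * δ = t ^ 2 := by
    apply (algebraMap F K).injective
    rw [map_mul, map_pow, map_pow]
    linear_combination (algebraMap F K s * ω - algebraMap F K t) * h - algebraMap F K s ^ 2 * hω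
  have hs : s = 0 := by
    by_contra hs
    exact hδ ⟨t / s, by field_simp; linear_combination hnorm⟩
  exact ⟨hs, by simpa [hs] using hnorm.symm⟩

variable [DecidableEq K]

/-- The action of `PGL₂(F)` on the projective line over an extension `K` of `F`. -/
noncomputable instance projGenLinGroupMulActionOnePoint : MulAction PGL(2, F) (OnePoint K) :=
  letI := MulAction.compHom (OnePoint K) (GeneralLinearGroup.map (n := Fin 2) (algebraMap F K))
  ProjGenLinGroup.mulActionOfGL fun u p ↦ by
    change (GeneralLinearGroup.scalar (Fin 2) u).map (algebraMap F K) • p = p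
    cases p with
    | infty => simp [OnePoint.smul_infty_eq_self_iff]
    | coe z => simp [OnePoint.smul_some_eq_ite]

lemma projGenLinGroup_mk_smul (g : GL (Fin 2) F) (p : OnePoint K) :
    mk g • p = g.map (algebraMap F K) • p :=
  rfl

lemma fixedBy_mk_of_mem_nonsplitCartan {g : GL (Fin 2) F} (hg : g ∈ nonsplitCartan δ)
    (hg1 : mk g ≠ 1) : fixedBy (OnePoint K) (mk g) = nonsplitCartanPoles K δ := by
  have h10 : algebraMap F K (g 1 0) ≠ 0 := by
    simpa using apply_one_zero_ne_zero_of_mem_nonsplitCartan hg hg1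
  ext p
  rw [mem_fixedBy, projGenLinGroup_mk_smul]
  cases p with
  | infty => simpa [nonsplitCartanPoles, OnePoint.smul_infty_eq_self_iff] using h10
  | coe z =>
    have hfactor : algebraMap F K (g 1 0) * z ^ 2 - algebraMap F K δ * algebraMap F K (g 1 0) =
        algebraMap F K (g 1 0) * (z ^ 2 - algebraMap F K δ) := by ring
    rw [← GeneralLinearGroup.fixpointPolynomial_aeval_eq_zero_iff]
    simp [nonsplitCartanPoles, GeneralLinearGroup.fixpointPolynomial, hg.1, hg.2, hfactor, h10,
      sub_eq_zero]

lemma mk_smul_fixedBy_mk {g x : GL (Fin 2) F} (hg : x * g * x⁻¹ ∈ nonsplitCartan δ)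
    (hg1 : mk g ≠ 1) :
    mk x • fixedBy (OnePoint K) (mk g) = nonsplitCartanPoles K δ := by
  rw [smul_fixedBy, ← map_inv, ← map_mul, ← map_mul]
  exact fixedBy_mk_of_mem_nonsplitCartan hg (by simpa using hg1)

lemma mem_nonsplitCartanNormalizer_of_smul_mem (hδ : ¬ IsSquare δ) {g : GL (Fin 2) F} {ω : K}
    (hω : ω ^ 2 = algebraMap F K δ)
    (hg : mk g • (ω : OnePoint K) ∈ nonsplitCartanPoles K δ) :
    g ∈ nonsplitCartanNormalizer δ := by
  obtain ⟨z, hz, hgz⟩ := hg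
  rw [projGenLinGroup_mk_smul, OnePoint.smul_some_eq_ite] at hgz
  split_ifs at hgz with hden
  · exact absurd hgz (OnePoint.coe_ne_infty z)
  rw [OnePoint.coe_eq_coe, eq_div_iff hden] at hgz
  simp only [GeneralLinearGroup.map_apply] at hgz
  rcases sq_eq_sq_iff_eq_or_eq_neg.1 (Eq.trans hz hω.symm) with rfl | rfl
  · have hlin : algebraMap F K (g 1 1 - g 0 0) * z + algebraMap F K (δ * g 1 0 - g 0 1) = 0 := by
      simp only [map_sub, map_mul]
      linear_combination hgz - algebraMap F K (g 1 0) * hω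
    obtain ⟨h₁, h₂⟩ := eq_zero_and_eq_zero_of_mul_add_eq_zero hδ hω hlin
    exact .inl ⟨sub_eq_zero.1 h₁, (sub_eq_zero.1 h₂).symm⟩
  · have hlin : algebraMap F K (g 1 1 + g 0 0) * ω + algebraMap F K (δ * g 1 0 + g 0 1) = 0 := by
      simp only [map_add, map_mul]
      linear_combination -hgz - algebraMap F K (g 1 0) * hω
    obtain ⟨h₁, h₂⟩ := eq_zero_and_eq_zero_of_mul_add_eq_zero hδ hω hlin
    exact .inr ⟨eq_neg_of_add_eq_zero_left h₁, eq_neg_of_add_eq_zero_right h₂⟩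

variable {G : Subgroup (GL (Fin 2) F)}

theorem fixesTwoPoints_map_mk (hF : ringChar F ≠ 2) (hδ : δ ≠ 0)
    (hloc : ∀ g ∈ G, ∃ x, x * g * x⁻¹ ∈ nonsplitCartan δ) {ω : K}
    (hω : ω ^ 2 = algebraMap F K δ) : FixesTwoPoints (G.map mk) (OnePoint K) := by
  rintro ⟨_, g, hg, rfl⟩ hg1
  obtain ⟨x, hx⟩ := hloc g hg
  change (fixedBy (OnePoint K) (mk g)).ncard = 2
  rw [← Set.ncard_smul_set (mk x), mk_smul_fixedBy_mk hx fun h ↦ hg1 (Subtype.ext h),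
    ncard_nonsplitCartanPoles hF hδ hω]

theorem exists_conj_mem_nonsplitCartanNormalizer (hδ : ¬ IsSquare δ) {ω : K}
    (hω : ω ^ 2 = algebraMap F K δ) (hloc : ∀ g ∈ G, ∃ x, x * g * x⁻¹ ∈ nonsplitCartan δ)
    (haxis : PreservesAxis (G.map mk) (OnePoint K)) :
    ∃ x, ∀ g ∈ G, x * g * x⁻¹ ∈ nonsplitCartanNormalizer δ := by
  obtain ⟨⟨_, a, ha, rfl⟩, ha1, hinv⟩ := haxis
  obtain ⟨x, hx⟩ := hloc a ha
  have hfix := mk_smul_fixedBy_mk (K := K) hx fun h ↦ ha1 (Subtype.ext h)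
  refine ⟨x, fun g hg ↦ mem_nonsplitCartanNormalizer_of_smul_mem hδ hω ?_⟩
  have hga : mk g • fixedBy (OnePoint K) (mk a) = fixedBy (OnePoint K) (mk a) :=
    hinv ⟨_, g, hg, rfl⟩
  have hpoles : mk (x * g * x⁻¹) • nonsplitCartanPoles K δ = nonsplitCartanPoles K δ := by
    rw [← hfix, smul_smul, ← map_mul, inv_mul_cancel_right, map_mul, mul_smul, hga]
  exact hpoles.subset (Set.smul_mem_smul_set (Set.mem_image_of_mem _ hω))

theorem card_map_mk_dvd [Finite F] (hδ : ¬ IsSquare δ)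
    (hloc : ∀ g ∈ G, ∃ x, x * g * x⁻¹ ∈ nonsplitCartan δ) :
    Nat.card (G.map mk) ∣ Nat.card F + 1 := by
  classical
  have hfree (p : OnePoint F) : stabilizer (G.map mk) p = ⊥ := by
    rw [eq_bot_iff]
    rintro ⟨_, g, hg, rfl⟩ hgp
    by_contra hg1
    obtain ⟨x, hx⟩ := hloc g hg
    have hfix := mk_smul_fixedBy_mk (K := F) hx fun h ↦ hg1 (Subtype.ext h)
    have hp : p ∈ fixedBy (OnePoint F) (mk g) := hgp
    obtain ⟨z, hz, -⟩ := hfix.subset (Set.smul_mem_smul_set hp)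
    exact hδ ⟨z, by simpa [sq] using Eq.symm hz⟩
  have hcard : Nat.card (OnePoint F) = Nat.card F + 1 := Finite.card_option
  rw [← hcard, Nat.card_congr (selfEquivOrbitsQuotientProd hfree), Nat.card_prod]
  exact dvd_mul_left _ _

open Polynomial in
lemma exists_finite_extension_sq_eq.{u} {F : Type u} [Field F] [Finite F] (δ : F) :
    ∃ (K : Type u) (_ : Field K) (_ : Algebra F K) (_ : Finite K),
      ∃ ω : K, ω ^ 2 = algebraMap F K δ := by
  have hdeg : ((X ^ 2 - C δ).map (algebraMap F (X ^ 2 - C δ).SplittingField)).degree ≠ 0 := by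
    rw [degree_map, degree_X_pow_sub_C two_pos]
    norm_num
  obtain ⟨ω, hω⟩ := (SplittingField.splits (X ^ 2 - C δ)).exists_eval_eq_zero hdeg
  exact ⟨_, inferInstance, inferInstance, Module.finite_of_finite F, ω,
    by simpa [sub_eq_zero] using hω⟩

theorem local_global_nonsplit_cartan_general [Finite F] (hδ : ¬ IsSquare δ)
    (hloc : ∀ g ∈ G, ∃ x, x * g * x⁻¹ ∈ nonsplitCartan δ) :
    (∃ x, ∀ g ∈ G, x * g * x⁻¹ ∈ nonsplitCartanNormalizer δ) ∨
    (Nonempty (G.map mk ≃* alternatingGroup (Fin 4)) ∧ Nat.card F % 12 = 11) ∨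
    (Nonempty (G.map mk ≃* Equiv.Perm (Fin 4)) ∧ Nat.card F % 24 = 23) ∨
    (Nonempty (G.map mk ≃* alternatingGroup (Fin 5)) ∧ Nat.card F % 60 = 59) := by
  classical
  obtain ⟨K, _, _, _, ω, hω⟩ := exists_finite_extension_sq_eq δ
  have hF : ringChar F ≠ 2 := fun h ↦ hδ (FiniteField.isSquare_of_char_two h δ)
  have hδ0 : δ ≠ 0 := fun h ↦ hδ (h ▸ .zero)
  have : Finite PGL(2, F) := .of_surjective _ mk_surjective
  have : Finite (OnePoint K) := inferInstanceAs (Finite (Option K))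
  have hpoles : FixesTwoPoints (G.map mk) (OnePoint K) := fixesTwoPoints_map_mk hF hδ0 hloc hω
  have hdvd := card_map_mk_dvd hδ hloc
  rcases hpoles.subsingleton_or_preservesAxis_or_nonempty_mulEquiv with
    htriv | haxis | ⟨⟨e⟩⟩ | ⟨⟨e⟩⟩ | ⟨⟨e⟩⟩
  · refine .inl ⟨1, fun g hg ↦ .inl ?_⟩
    have hg1 : mk g = 1 := Subtype.ext_iff.1 (htriv.elim ⟨_, g, hg, rfl⟩ (1 : G.map mk))
    simpa using mem_nonsplitCartan_of_mk_eq_one hg1 δ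
  · exact .inl (exists_conj_mem_nonsplitCartanNormalizer hδ hω hloc haxis)
  · rw [Nat.card_congr e.toEquiv, nat_card_alternatingGroup, Nat.card_fin] at hdvd
    exact .inr (.inl ⟨⟨e⟩, by change 12 ∣ _ at hdvd; omega⟩)
  · rw [Nat.card_congr e.toEquiv, Nat.card_perm, Nat.card_fin] at hdvd
    exact .inr (.inr (.inl ⟨⟨e⟩, by change 24 ∣ _ at hdvd; omega⟩))
  · rw [Nat.card_congr e.toEquiv, nat_card_alternatingGroup, Nat.card_fin] at hdvd
    exact .inr (.inr (.inr ⟨⟨e⟩, by change 60 ∣ _ at hdvd; omega⟩))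

end ProjectiveLine

/-- If every element of `G ≤ GL₂(F_ℓ)` lies in a conjugate of the nonsplit
Cartan, then `G` is contained in a conjugate of `C_ns`, or of `N_ns`, or its projective
image is exceptional with the stated congruence on `ℓ`. -/
theorem local_global_nonsplit_cartan
    {ℓ : ℕ} [Fact ℓ.Prime] (hℓ : ℓ ≠ 2) (δ : ZMod ℓ) (hδ : ¬ IsSquare δ)
    (G : Subgroup (GL2 ℓ))
    (hloc : ∀ g ∈ G, ∃ x : GL2 ℓ, InCns δ (x * g * x⁻¹)) :
    (∃ x : GL2 ℓ, ∀ g ∈ G, InCns δ (x * g * x⁻¹)) ∨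
    (∃ x : GL2 ℓ, ∀ g ∈ G, InNns δ (x * g * x⁻¹)) ∨
    (IsA4 (projImage G) ∧ ℓ % 12 = 11) ∨
    (IsS4 (projImage G) ∧ ℓ % 24 = 23) ∨
    (IsA5 (projImage G) ∧ ℓ % 60 = 59) := by
  have h := local_global_nonsplit_cartan_general hδ hloc
  rw [Nat.card_zmod] at h
  exact .inr h
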